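/- arXiv:2411.11404 — 2 statements merged into one kernel-verified Lean document; each statement's English description precedes it below -/
import Mathlib

section
/- For all integers J ≥ 0 and N ≥ 0, MO(−2, 3J; 3N+2) ≡ 0 (mod 9) and MO(−2, 3J+2; 3N+2) ≡ 0 (mod 9). -/
/-!
In `MO(-2, t; 3N+2) = ∑ p₋₃(k) cm2(n, t)` with `k + n(n+1)/2 = 3N + 2`, the triangular number
`n(n+1)/2` is `0` modulo `3` unless `n ≡ 1`, when it is `1`. Every single term is a multiple of `9`:

* if `n ≢ 1 (mod 3)`, then `k ≡ 2 (mod 3)`, and `9 ∣ p₋₃(k)` (`nine_dvd_p3`);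
* if `n ≡ 1 (mod 3)`, then `k ≡ 1 (mod 3)`, so `3 ∣ p₋₃(k)` (`three_dvd_p3`), and
  `(2t+1) cm2(n, t) = ± (2n+1) C(n+t, 2t)` with `3 ∣ 2n+1` and `3 ∤ 2t+1` for `t ≡ 0, 2 (mod 3)`
  gives `3 ∣ cm2(n, t)` (`three_dvd_cm2`).

Both congruences for `p₋₃` come from the logarithmic derivative of `∏ (1 - q^j)⁻³`, that is, from
the recurrence `k p₋₃(k) = 3 ∑ σ(j) p₋₃(k - j)` (`mul_p3`), a consequence of Euler's
`n p(n) = ∑ σ(j) p(n - j)` (`mul_numPartitions`). The factor `3` on the right gives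
`3 ∣ p₋₃(k)` when `3 ∤ k`. When `k ≡ 2 (mod 3)`, the summands with `3 ∤ k - j` are therefore
multiples of `3`, and the others have `j ≡ 2 (mod 3)`, which forces `3 ∣ σ(j)`; so the right side
is a multiple of `9`.
-/


open Finset

noncomputable section

/-- `p(k)`: the number of integer partitions of `k`. -/
def numPartitions (k : ℕ) : ℕ := Nat.card (Nat.Partition k)

/-- `pod(k)`: the number of partitions of `k` in which the odd parts are distinct
(even parts may repeat). -/
def pod (k : ℕ) : ℕ :=
  Nat.card {p : Nat.Partition k // ∀ i ∈ p.parts, Odd i → p.parts.count i ≤ 1}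

/-- `p₋₃(k)`: the number of 3-colored partitions of `k`, i.e. ordered triples
`(λ₁, λ₂, λ₃)` of partitions with `|λ₁| + |λ₂| + |λ₃| = k`. -/
def p3 (k : ℕ) : ℕ :=
  Nat.card {x : (Σ a : ℕ, Nat.Partition a) × (Σ a : ℕ, Nat.Partition a) ×
      (Σ a : ℕ, Nat.Partition a) // x.1.1 + x.2.1.1 + x.2.2.1 = k}

/-- `c1(n, t) = ∑_{k=0}^{n} (−1)^{n+k} (C(n+k+1, 2k+1) + C(n+k, 2k+1)) C(k, t) 3^{k−t}`
(for `k < t` the binomial `C(k, t)` vanishes, so the truncated exponent `k - t` is harmless). -/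
def c1 (n t : ℕ) : ℤ :=
  ∑ k ∈ Finset.range (n + 1),
    (-1 : ℤ) ^ (n + k) *
      (((n + k + 1).choose (2 * k + 1) : ℤ) + ((n + k).choose (2 * k + 1) : ℤ)) *
      (k.choose t : ℤ) * 3 ^ (k - t)

/-- `cm1(n, t) = ∑_{k=0}^{n} (−1)^{n+k} (C(n+k+1, 2k+1) + C(n+k, 2k+1)) C(k, t)`. -/
def cm1 (n t : ℕ) : ℤ :=
  ∑ k ∈ Finset.range (n + 1),
    (-1 : ℤ) ^ (n + k) *
      (((n + k + 1).choose (2 * k + 1) : ℤ) + ((n + k).choose (2 * k + 1) : ℤ)) *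
      (k.choose t : ℤ)

/-- `cm2(n, t) = (−1)^{n+t} (C(n+t, 2t) + 2 C(n+t, 2t+1))`. -/
def cm2 (n t : ℕ) : ℤ :=
  (-1 : ℤ) ^ (n + t) * (((n + t).choose (2 * t) : ℤ) + 2 * ((n + t).choose (2 * t + 1) : ℤ))

/-- `c0(n, t) = (−1)^{n+⌊(n+t)/2⌋} C(⌊(n+t)/2⌋, t)`. -/
def c0 (n t : ℕ) : ℤ :=
  (-1 : ℤ) ^ (n + (n + t) / 2) * (((n + t) / 2).choose t : ℤ)

/-- `MO(1, t; N) = ∑ p(k) · c1(n, t)`, summed over all pairs of nonnegative integers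
`(k, n)` with `3k + n(n+1)/2 = N` (all such pairs satisfy `k ≤ N` and `n ≤ N`). -/
def MO1 (t N : ℕ) : ℤ :=
  ∑ kn ∈ (Finset.range (N + 1) ×ˢ Finset.range (N + 1)).filter
      (fun kn => 3 * kn.1 + kn.2 * (kn.2 + 1) / 2 = N),
    (numPartitions kn.1 : ℤ) * c1 kn.2 t

/-- `MO(−1, t; N) = ∑ B̄₃(k) · cm1(n, t)`, summed over all pairs of nonnegative integers
`(k, n)` with `k + n(n+1)/2 = N`, where `B3` is the coefficient function of
`f₂ f₃ / (f₁² f₆)`. -/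
def MOm1 (B3 : ℕ → ℤ) (t N : ℕ) : ℤ :=
  ∑ kn ∈ (Finset.range (N + 1) ×ˢ Finset.range (N + 1)).filter
      (fun kn => kn.1 + kn.2 * (kn.2 + 1) / 2 = N),
    B3 kn.1 * cm1 kn.2 t

/-- `MO(2, t; N) = ∑ (−1)^k pod(k) · C(n+t, 2t)`, summed over all pairs of nonnegative
integers `(k, n)` with `k + n(n+1)/2 = N`. -/
def MO2 (t N : ℕ) : ℤ :=
  ∑ kn ∈ (Finset.range (N + 1) ×ˢ Finset.range (N + 1)).filter
      (fun kn => kn.1 + kn.2 * (kn.2 + 1) / 2 = N),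
    (-1 : ℤ) ^ kn.1 * (pod kn.1 : ℤ) * ((kn.2 + t).choose (2 * t) : ℤ)

/-- `MO(−2, t; N) = ∑ p₋₃(k) · cm2(n, t)`, summed over all pairs of nonnegative
integers `(k, n)` with `k + n(n+1)/2 = N`. -/
def MOm2 (t N : ℕ) : ℤ :=
  ∑ kn ∈ (Finset.range (N + 1) ×ˢ Finset.range (N + 1)).filter
      (fun kn => kn.1 + kn.2 * (kn.2 + 1) / 2 = N),
    (p3 kn.1 : ℤ) * cm2 kn.2 t

/-- `MO(0, t; N) = ∑ pod(k) · c0(n, t)`, summed over all pairs of nonnegative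
integers `(k, n)` with `k + n(n+1)/2 = N`. -/
def MO0 (t N : ℕ) : ℤ :=
  ∑ kn ∈ (Finset.range (N + 1) ×ˢ Finset.range (N + 1)).filter
      (fun kn => kn.1 + kn.2 * (kn.2 + 1) / 2 = N),
    (pod kn.1 : ℤ) * c0 kn.2 t

/-! ### The divisor-sum recurrence for partitions -/

/-- The total number of occurrences of the part `i` in all partitions of `n`. -/
def totalCount (i n : ℕ) : ℕ := ∑ p : Nat.Partition n, p.parts.count i

lemma numPartitions_eq_card (n : ℕ) : numPartitions n = Fintype.card (Nat.Partition n) :=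
  Nat.card_eq_fintype_card

lemma totalCount_of_lt {i n : ℕ} (h : n < i) : totalCount i n = 0 := by
  refine Finset.sum_eq_zero fun p _ => Multiset.count_eq_zero.2 fun hi => ?_
  exact absurd (p.le_of_mem_parts hi) (by omega)

/-- Removing one copy of the part `i` is a bijection from the partitions of `n` containing `i`
to the partitions of `n - i`, and lowers the multiplicity of `i` by one. -/
lemma totalCount_of_le {i n : ℕ} (hi : 1 ≤ i) (hn : i ≤ n) :
    totalCount i n = totalCount i (n - i) + numPartitions (n - i) := by
  have h1 : totalCount i n =
      ∑ p : {p : Nat.Partition n // i ∈ p.parts}, p.1.parts.count i := by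
    unfold totalCount
    rw [← Finset.sum_subtype (Finset.univ.filter fun p : Nat.Partition n => i ∈ p.parts)
      (by simp) (fun p => p.parts.count i), Finset.sum_filter]
    refine Finset.sum_congr rfl fun p _ => ?_
    split_ifs with h
    · rfl
    · exact Multiset.count_eq_zero.2 h
  rw [h1, ← (Nat.Partition.partitionWithPartEquiv hi hn).symm.sum_comp]
  simp only [Nat.Partition.partitionWithPartEquiv_symm_apply_parts, Multiset.count_cons_self,
    Finset.sum_add_distrib]
  simp [totalCount, numPartitions_eq_card]

lemma totalCount_eq {i : ℕ} (hi : 1 ≤ i) (n : ℕ) :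
    totalCount i n = ∑ j ∈ Finset.Icc 1 n with i ∣ j, numPartitions (n - j) := by
  induction n using Nat.strong_induction_on with
  | _ n ih =>
    rcases lt_or_ge n i with h | h
    · rw [totalCount_of_lt h, Finset.sum_eq_zero]
      intro j hj
      simp only [Finset.mem_filter, Finset.mem_Icc] at hj
      have := Nat.le_of_dvd (by omega) hj.2
      omega
    · obtain ⟨m, rfl⟩ := Nat.exists_eq_add_of_le' h
      rw [totalCount_of_le hi h, Nat.add_sub_cancel, ih m (by omega)]
      have h2 : (Finset.Icc 1 (m + i)).filter (i ∣ ·) =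
          insert i (((Finset.Icc 1 m).filter (i ∣ ·)).map (addRightEmbedding i)) := by
        ext j
        simp only [Finset.mem_filter, Finset.mem_Icc, Finset.mem_insert, Finset.mem_map,
          addRightEmbedding_apply]
        constructor
        · rintro ⟨⟨h1, h2⟩, h3⟩
          have := Nat.le_of_dvd (by omega) h3
          by_cases hji : j = i
          · exact Or.inl hji
          · exact Or.inr ⟨j - i, ⟨⟨by omega, by omega⟩, Nat.dvd_sub h3 dvd_rfl⟩, by omega⟩
        · rintro (rfl | ⟨a, ⟨⟨h1, h2⟩, h3⟩, rfl⟩)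
          · exact ⟨⟨hi, by omega⟩, dvd_rfl⟩
          · exact ⟨⟨by omega, by omega⟩, Dvd.dvd.add h3 dvd_rfl⟩
      rw [h2, Finset.sum_insert, Finset.sum_map, add_comm]
      · simp [Nat.add_sub_add_right]
      · simp

/-- Euler's recurrence `n p(n) = ∑ σ(j) p(n - j)`: both sides add up all the parts of all the
partitions of `n`. -/
lemma mul_numPartitions (n : ℕ) :
    n * numPartitions n =
      ∑ j ∈ Finset.Icc 1 n, (∑ d ∈ j.divisors, d) * numPartitions (n - j) := by
  have h1 : n * numPartitions n = ∑ i ∈ Finset.Icc 1 n, i * totalCount i n := by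
    have hp (p : Nat.Partition n) : ∑ i ∈ Finset.Icc 1 n, i * p.parts.count i = n := by
      conv_rhs => rw [← p.parts_sum, Finset.sum_multiset_count]
      simp only [smul_eq_mul, mul_comm]
      symm
      apply Finset.sum_subset
      · intro i hi
        rw [Multiset.mem_toFinset] at hi
        exact Finset.mem_Icc.2 ⟨p.parts_pos hi, p.le_of_mem_parts hi⟩
      · intro i _ hi
        rw [Multiset.mem_toFinset] at hi
        simp [Multiset.count_eq_zero.2 hi]
    simp only [totalCount, Finset.mul_sum]
    rw [Finset.sum_comm]
    simp [hp, numPartitions_eq_card, mul_comm]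
  rw [h1]
  have h2 : ∀ i ∈ Finset.Icc 1 n, i * totalCount i n =
      ∑ j ∈ Finset.Icc 1 n, if i ∣ j then i * numPartitions (n - j) else 0 := by
    intro i hi
    rw [totalCount_eq (Finset.mem_Icc.1 hi).1, Finset.mul_sum, Finset.sum_filter]
  rw [Finset.sum_congr rfl h2, Finset.sum_comm]
  refine Finset.sum_congr rfl fun j hj => ?_
  rw [Finset.mem_Icc] at hj
  rw [← Finset.sum_filter, Finset.sum_mul]
  refine Finset.sum_congr ?_ fun _ _ => rfl
  ext d
  simp only [Finset.mem_filter, Finset.mem_Icc, Nat.mem_divisors]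
  constructor
  · rintro ⟨_, h⟩
    exact ⟨h, by omega⟩
  · rintro ⟨h, _⟩
    have := Nat.le_of_dvd (by omega) h
    have := Nat.pos_of_dvd_of_pos h (by omega)
    exact ⟨⟨by omega, by omega⟩, h⟩

/-! ### Three colors: generating functions -/

/-- The generating function `∑ p(k) q^k`. -/
def partSeries : PowerSeries ℤ := PowerSeries.mk fun n => (numPartitions n : ℤ)

/-- The generating function `∑ σ(k) q^k` (with `σ(0) = 0`, as `Nat.divisors 0 = ∅`). -/
def sigmaSeries : PowerSeries ℤ := PowerSeries.mk fun n => ((∑ d ∈ n.divisors, d : ℕ) : ℤ)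

lemma card_fiber_add {X Y : Type*} (f : X → ℕ) (g : Y → ℕ) (k : ℕ)
    [∀ a, Finite {x // f x = a}] [∀ b, Finite {y // g y = b}] :
    Nat.card {z : X × Y // f z.1 + g z.2 = k} =
      ∑ ab ∈ Finset.HasAntidiagonal.antidiagonal k,
        Nat.card {x // f x = ab.1} * Nat.card {y // g y = ab.2} := by
  let e : {z : X × Y // f z.1 + g z.2 = k} ≃
      Σ ab : Finset.HasAntidiagonal.antidiagonal k, {x // f x = ab.1.1} × {y // g y = ab.1.2} :=
    { toFun := fun z => ⟨⟨(f z.1.1, g z.1.2), Finset.HasAntidiagonal.mem_antidiagonal.2 z.2⟩,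
        ⟨z.1.1, rfl⟩, ⟨z.1.2, rfl⟩⟩
      invFun := fun w => ⟨(w.2.1.1, w.2.2.1), by
        rw [w.2.1.2, w.2.2.2]; exact Finset.HasAntidiagonal.mem_antidiagonal.1 w.1.2⟩
      left_inv := fun _ => rfl
      right_inv := by
        rintro ⟨⟨⟨a, b⟩, h⟩, ⟨x, hx⟩, ⟨y, hy⟩⟩
        dsimp only at hx hy
        subst hx hy
        rfl }
  rw [Nat.card_congr e, Nat.card_sigma]
  simp only [Nat.card_prod]
  exact Finset.sum_coe_sort (Finset.HasAntidiagonal.antidiagonal k)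
    (fun ab => Nat.card {x // f x = ab.1} * Nat.card {y // g y = ab.2})

/-- The fiber of the size map over `s`. -/
def fiberEquiv (s : ℕ) :
    {x : Σ a : ℕ, Nat.Partition a // x.1 = s} ≃ Nat.Partition s where
  toFun x := x.2 ▸ x.1.2
  invFun p := ⟨⟨s, p⟩, rfl⟩
  left_inv := by rintro ⟨⟨a, p⟩, rfl⟩; rfl
  right_inv _ := rfl

instance (s : ℕ) : Finite {x : Σ a : ℕ, Nat.Partition a // x.1 = s} :=
  Finite.of_equiv _ (fiberEquiv s).symm

/-- Each color has size at most the total, so there are finitely many colored partitions. -/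
instance (s : ℕ) : Finite {x : (Σ a : ℕ, Nat.Partition a) × (Σ a : ℕ, Nat.Partition a) //
    x.1.1 + x.2.1 = s} := by
  let F : {x : (Σ a : ℕ, Nat.Partition a) × (Σ a : ℕ, Nat.Partition a) // x.1.1 + x.2.1 = s} →
      (Σ a : Fin (s + 1), Nat.Partition a) × (Σ a : Fin (s + 1), Nat.Partition a) :=
    fun x => (⟨⟨x.1.1.1, by have := x.2; omega⟩, x.1.1.2⟩,
      ⟨⟨x.1.2.1, by have := x.2; omega⟩, x.1.2.2⟩)
  refine Finite.of_injective F ?_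
  rintro ⟨⟨⟨a, p⟩, ⟨b, q⟩⟩, h⟩ ⟨⟨⟨a', p'⟩, ⟨b', q'⟩⟩, h'⟩ hF
  simp only [F, Prod.mk.injEq, Sigma.mk.injEq, Fin.mk.injEq] at hF
  obtain ⟨⟨rfl, h1⟩, ⟨rfl, h2⟩⟩ := hF
  simp_all

lemma mk_p3 : PowerSeries.mk (fun n => (p3 n : ℤ)) = partSeries ^ 3 := by
  have h3 : partSeries ^ 3 = partSeries * (partSeries * partSeries) := by ring
  ext k
  rw [h3, PowerSeries.coeff_mk, PowerSeries.coeff_mul, p3]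
  have hc := card_fiber_add (fun x : Σ a : ℕ, Nat.Partition a => x.1)
    (fun y : (Σ a : ℕ, Nat.Partition a) × (Σ a : ℕ, Nat.Partition a) => y.1.1 + y.2.1) k
  simp only [← add_assoc] at hc
  rw [hc]
  have hc2 := fun s => card_fiber_add (fun x : Σ a : ℕ, Nat.Partition a => x.1)
    (fun x : Σ a : ℕ, Nat.Partition a => x.1) s
  have hf := fun s => Nat.card_congr (fiberEquiv s)
  push_cast
  refine Finset.sum_congr rfl fun ab _ => ?_
  rw [hc2, PowerSeries.coeff_mul, hf]
  push_cast
  simp only [hf, partSeries, PowerSeries.coeff_mk, numPartitions]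

lemma coeff_sigmaSeries_mul (f : ℕ → ℤ) (n : ℕ) :
    PowerSeries.coeff n (sigmaSeries * PowerSeries.mk f) =
      ∑ j ∈ Finset.Icc 1 n, ((∑ d ∈ j.divisors, d : ℕ) : ℤ) * f (n - j) := by
  rw [PowerSeries.coeff_mul, Finset.Nat.sum_antidiagonal_eq_sum_range_succ_mk]
  simp only [sigmaSeries, PowerSeries.coeff_mk]
  symm
  apply Finset.sum_subset
  · intro j hj
    simp only [Finset.mem_Icc, Finset.mem_range] at *
    omega
  · intro j hj hj'
    have : j = 0 := by
      simp only [Finset.mem_Icc, Finset.mem_range] at *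
      omega
    simp [this]

lemma coeff_X_mul_derivative (f : PowerSeries ℤ) (n : ℕ) :
    PowerSeries.coeff n (PowerSeries.X * PowerSeries.derivative ℤ f) =
      n * PowerSeries.coeff n f := by
  cases n with
  | zero => simp
  | succ n => rw [PowerSeries.coeff_succ_X_mul, PowerSeries.coeff_derivative]; push_cast; ring

lemma X_mul_derivative_partSeries :
    PowerSeries.X * PowerSeries.derivative ℤ partSeries = sigmaSeries * partSeries := by
  ext n
  rw [coeff_X_mul_derivative, partSeries, coeff_sigmaSeries_mul, PowerSeries.coeff_mk]
  exact_mod_cast mul_numPartitions n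

/-- The logarithmic derivative of the cube of `partSeries` is three times that of `partSeries`. -/
lemma mul_p3 (n : ℕ) :
    (n : ℤ) * p3 n =
      3 * ∑ j ∈ Finset.Icc 1 n, ((∑ d ∈ j.divisors, d : ℕ) : ℤ) * (p3 (n - j) : ℤ) := by
  have h : PowerSeries.X * PowerSeries.derivative ℤ (PowerSeries.mk fun n => (p3 n : ℤ)) =
      3 * (sigmaSeries * PowerSeries.mk fun n => (p3 n : ℤ)) := by
    rw [mk_p3, PowerSeries.derivative_pow]
    linear_combination 3 * partSeries ^ 2 * X_mul_derivative_partSeries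
  have h' := congrArg (PowerSeries.coeff n) h
  rw [coeff_X_mul_derivative, PowerSeries.coeff_mk,
    show (3 : PowerSeries ℤ) = PowerSeries.C (3 : ℤ) by simp, PowerSeries.coeff_C_mul,
    coeff_sigmaSeries_mul] at h'
  exact h'

/-! ### Congruences -/

lemma three_dvd_p3 {k : ℕ} (hk : ¬ 3 ∣ k) : (3 : ℤ) ∣ p3 k := by
  have h : (3 : ℤ) ∣ (k : ℤ) * p3 k := by rw [mul_p3]; exact dvd_mul_right _ _
  exact (Int.prime_three.dvd_or_dvd h).resolve_left (by exact_mod_cast hk)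

/-- If `d e = j ≡ 2 (mod 3)` then `d + e ≡ 0 (mod 3)`; adding these up over all the divisors `d`
of `j` gives `2 σ(j) ≡ 0 (mod 3)`. -/
lemma three_dvd_sigma {j : ℕ} (hj : j % 3 = 2) : 3 ∣ ∑ d ∈ j.divisors, d := by
  have h2 : 3 ∣ ∑ d ∈ j.divisors, (d + j / d) := by
    refine Finset.dvd_sum fun d hd => ?_
    obtain ⟨e, rfl⟩ := Nat.dvd_of_mem_divisors hd
    have hd0 : 0 < d := Nat.pos_of_mem_divisors hd
    rw [Nat.mul_div_cancel_left _ hd0]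
    rw [Nat.mul_mod] at hj
    have h1 := Nat.mod_lt d (show 3 > 0 by norm_num)
    have h2 := Nat.mod_lt e (show 3 > 0 by norm_num)
    generalize hx : d % 3 = x at *
    generalize hy : e % 3 = y at *
    interval_cases x <;> interval_cases y <;> simp at hj <;> omega
  rw [Finset.sum_add_distrib, Nat.sum_div_divisors j (fun d => d)] at h2
  omega

lemma nine_dvd_p3 {k : ℕ} (hk : k % 3 = 2) : (9 : ℤ) ∣ p3 k := by
  have h : (9 : ℤ) ∣ (k : ℤ) * p3 k := by
    rw [mul_p3, show (9 : ℤ) = 3 * 3 by norm_num]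
    refine mul_dvd_mul_left 3 (Finset.dvd_sum fun j hj => ?_)
    rw [Finset.mem_Icc] at hj
    by_cases h3 : 3 ∣ k - j
    · exact Dvd.dvd.mul_right (by exact_mod_cast three_dvd_sigma (j := j) (by omega)) _
    · exact Dvd.dvd.mul_left (three_dvd_p3 h3) _
  refine IsCoprime.dvd_of_dvd_mul_left ?_ h
  have : Nat.Coprime 9 k := by
    rw [show 9 = 3 ^ 2 by norm_num]
    exact Nat.Coprime.pow_left 2 ((Nat.Prime.coprime_iff_not_dvd Nat.prime_three).2 (by omega))
  exact_mod_cast Nat.isCoprime_iff_coprime.2 this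

lemma mul_cm2 (n t : ℕ) :
    (2 * t + 1 : ℤ) * cm2 n t = (-1) ^ (n + t) * ((2 * n + 1) * ((n + t).choose (2 * t) : ℤ)) := by
  have h := Nat.choose_succ_right_eq (n + t) (2 * t)
  rw [cm2]
  rcases lt_or_ge n t with hnt | hnt
  · simp [Nat.choose_eq_zero_of_lt (show n + t < 2 * t by omega),
      Nat.choose_eq_zero_of_lt (show n + t < 2 * t + 1 by omega)]
  · obtain ⟨m, rfl⟩ := Nat.exists_eq_add_of_le hnt
    rw [show t + m + t - 2 * t = m by omega] at h
    zify at h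
    push_cast
    linear_combination (-1) ^ (t + m + t) * 2 * h

lemma three_dvd_cm2 {n t : ℕ} (hn : n % 3 = 1) (ht : t % 3 ≠ 1) : (3 : ℤ) ∣ cm2 n t := by
  have h : (3 : ℤ) ∣ (2 * t + 1 : ℤ) * cm2 n t := by
    rw [mul_cm2]
    exact Dvd.dvd.mul_left (Dvd.dvd.mul_right (by omega) _) _
  exact (Int.prime_three.dvd_or_dvd h).resolve_left (by omega)

lemma nine_dvd_MOm2 {t : ℕ} (ht : t % 3 ≠ 1) (N : ℕ) : (9 : ℤ) ∣ MOm2 t (3 * N + 2) := by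
  refine Finset.dvd_sum fun kn hkn => ?_
  obtain ⟨k, n⟩ := kn
  have h : k + n * (n + 1) / 2 = 3 * N + 2 := (Finset.mem_filter.1 hkn).2
  dsimp only
  have h2 : 2 * (n * (n + 1) / 2) = n * (n + 1) :=
    Nat.mul_div_cancel' (Nat.even_mul_succ_self n).two_dvd
  have h3 : n * (n + 1) % 3 = (n % 3) * ((n + 1) % 3) % 3 := Nat.mul_mod _ _ _
  by_cases hn : n % 3 = 1
  · rw [show (n + 1) % 3 = 2 by omega, hn] at h3
    rw [show (9 : ℤ) = 3 * 3 by norm_num]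
    exact mul_dvd_mul (three_dvd_p3 (by omega)) (three_dvd_cm2 hn ht)
  · have h4 : n * (n + 1) % 3 = 0 := by
      rcases (show n % 3 = 0 ∨ (n + 1) % 3 = 0 by omega) with h0 | h0 <;> rw [h3, h0] <;> simp
    exact Dvd.dvd.mul_right (nine_dvd_p3 (by omega)) _

theorem stmt17 (J N : ℕ) :
    (9 : ℤ) ∣ MOm2 (3 * J) (3 * N + 2) ∧ (9 : ℤ) ∣ MOm2 (3 * J + 2) (3 * N + 2) :=
  ⟨nine_dvd_MOm2 (by omega) N, nine_dvd_MOm2 (by omega) N⟩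
end
end

section
/- For all integers J ≥ 0 and N ≥ 0, MO(0, 27J+26; 27N+26) ≡ 0 (mod 3). -/
/-!
Write `T n = n (n + 1) / 2`, `P = ∑ pod(k) q ^ k` and `ψ = ∑ (-q) ^ T n`, both over `ZMod 3`.

*Reduction to `pod`.*  By Lucas' theorem `C(m, 27 J + 26)` is divisible by `3` unless `m ≡ 26`
modulo `27`.  With `m = ⌊(n + 27 J + 26) / 2⌋` this forces `n ≡ 0` or `-1` modulo `27`, hence
`27 ∣ T n`, and `k = 27 N + 26 - T n ≡ 26` modulo `27`.  It therefore suffices to show that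
`3 ∣ pod(27 n + 26)`.

*The congruence for `pod`.*  Gauss' identity says `P * ψ = 1` (`podSeries_mul_psi`); it is the limit
of Shanks' finite identity (`shanks`).  In characteristic `3` one has `ψ(q) ^ 3 = ψ(q ^ 3)`, and the
triangular numbers give the dissection `ψ(q) = A(q ^ 3) - q ψ(q ^ 9)` for some series `A`.
Let `U` be the operator extracting the coefficients with index `≡ 2` modulo `3`; it satisfies
`U (F(q) G(q ^ 3)) = U F * G`.  From `P(q) ψ(q ^ 3) = ψ(q) ^ 2` one gets
`U P * ψ(q) = ψ(q ^ 3) ^ 2`, so `U P * ψ(q ^ 3) = ψ(q ^ 3) ^ 2 ψ(q) ^ 2`, and in turn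
`U (U P) = ψ(q) ψ(q ^ 3) ^ 2`.  As no triangular number is `≡ 2` modulo `3`, `U (U (U P)) = 0`.
-/

open Finset

noncomputable section

/-! ### Shanks' finite form of Gauss' identity -/

/-- Shanks' identity. The `u k` are inverses of `1 - x ^ (2 k + 1)`. -/
theorem shanks {K : Type*} [CommRing K] (x : K) (u : ℕ → K)
    (hu : ∀ k, u k * (1 - x ^ (2 * k + 1)) = 1) (n : ℕ) :
    ∑ k ∈ range (2 * n), x ^ (k * (k + 1) / 2) =
      ∑ s ∈ range n, (∏ k ∈ Ico s n, (1 - x ^ (2 * k + 2)) * u k) * x ^ (s * (2 * n + 1)) := by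
  induction n with
  | zero => simp
  | succ n ih =>
    have hT1 : 2 * n * (2 * n + 1) / 2 = n * (2 * n + 1) := by
      rw [mul_assoc]; exact Nat.mul_div_cancel_left _ (by norm_num)
    have hT2 : (2 * n + 1) * (2 * n + 1 + 1) / 2 = n * (2 * n + 1) + (2 * n + 1) := by
      rw [show (2 * n + 1) * (2 * n + 1 + 1) = 2 * (n * (2 * n + 1) + (2 * n + 1)) by ring]
      exact Nat.mul_div_cancel_left _ (by norm_num)
    -- The increments of the summands on the right telescope in `s`.
    have tel : ∀ m ≤ n,
        ∑ s ∈ range m, ((∏ k ∈ Ico s (n + 1), (1 - x ^ (2 * k + 2)) * u k) *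
            x ^ (s * (2 * (n + 1) + 1)) -
          (∏ k ∈ Ico s n, (1 - x ^ (2 * k + 2)) * u k) * x ^ (s * (2 * n + 1))) =
        (∏ k ∈ Ico m n, (1 - x ^ (2 * k + 2)) * u k) * u n * x ^ (m * (2 * n + 1)) *
          (1 - x ^ (2 * m)) := by
      intro m
      induction m with
      | zero => simp
      | succ m ihm =>
        intro hm
        rw [sum_range_succ, ihm (by omega), prod_Ico_succ_top (by omega : m ≤ n),
          prod_eq_prod_Ico_succ_bot (by omega : m < n)]
        have h1 := hu m
        have h2 := hu n
        set Q := ∏ k ∈ Ico (m + 1) n, (1 - x ^ (2 * k + 2)) * u k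
        rw [show m * (2 * (n + 1) + 1) = m * (2 * n + 1) + 2 * m by ring,
          show (m + 1) * (2 * n + 1) = m * (2 * n + 1) + (2 * n + 1) by ring,
          show 2 * (m + 1) = 2 * m + 2 by ring, pow_add x (m * (2 * n + 1)) (2 * m),
          pow_add x (m * (2 * n + 1)) (2 * n + 1)]
        rw [show 2 * n + 2 = (2 * n + 1) + 1 by ring, pow_succ x (2 * n + 1)]
        rw [pow_succ x (2 * m)] at h1
        generalize x ^ (m * (2 * n + 1)) = z
        generalize x ^ (2 * m + 2) = c
        generalize x ^ (2 * n + 1) = a at *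
        generalize x ^ (2 * m) = b at *
        linear_combination (Q * (1 - c) * u n * z * a) * h1 + (Q * (1 - c) * u m * z) * h2
    have h := tel n le_rfl
    rw [sum_sub_distrib, ← ih] at h
    rw [show 2 * (n + 1) = 2 * n + 1 + 1 by ring] at h ⊢
    rw [sum_range_succ, sum_range_succ, sum_range_succ, hT1, hT2]
    rw [show n * (2 * n + 1 + 1 + 1) = n * (2 * n + 1) + 2 * n by ring]
    simp only [Nat.Ico_succ_singleton, prod_singleton, Ico_self, prod_empty, pow_add x (n * _)] at h ⊢
    have h2 := hu n
    rw [show 2 * n + 2 = (2 * n + 1) + 1 by ring, pow_succ x (2 * n + 1)] at *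
    have h3 : x ^ (2 * n + 1) = x ^ (2 * n) * x := pow_succ _ _
    generalize x ^ (2 * n + 1) = a at *
    generalize x ^ (n * (2 * n + 1)) = z at *
    linear_combination (-1) * h - z * (1 + a) * h2 - u n * z * a * h3

open PowerSeries

/-! ### The two generating series -/

/-- The generating series of `pod`, with coefficients modulo `3`. -/
def podSeries : (ZMod 3)⟦X⟧ := PowerSeries.mk fun n => (pod n : ZMod 3)

/-- The series `∑ (-q) ^ (n (n + 1) / 2)` modulo `3`. Triangular numbers are encoded as those `m` for
which `8 m + 1` is a square. -/
def psi : (ZMod 3)⟦X⟧ :=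
  open Classical in PowerSeries.mk fun m => if IsSquare (8 * m + 1) then (-1 : ZMod 3) ^ m else 0

theorem two_mul_tri (k : ℕ) : 2 * (k * (k + 1) / 2) = k * (k + 1) :=
  Nat.mul_div_cancel' (Nat.even_mul_succ_self k).two_dvd

theorem isSquare_iff_tri (m : ℕ) : IsSquare (8 * m + 1) ↔ ∃ k, k * (k + 1) / 2 = m := by
  constructor
  · rintro ⟨r, hr⟩
    obtain ⟨k, rfl⟩ : Odd r := by
      by_contra h
      rw [Nat.not_odd_iff_even] at h
      have := h.mul_left r
      rw [← hr] at this
      exact absurd this (by simp [parity_simps])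
    refine ⟨k, ?_⟩
    have := two_mul_tri k
    nlinarith
  · rintro ⟨k, rfl⟩
    refine ⟨2 * k + 1, ?_⟩
    have := two_mul_tri k
    nlinarith

theorem tri_inj {a b : ℕ} (h : a * (a + 1) / 2 = b * (b + 1) / 2) : a = b := by
  have h1 := two_mul_tri a
  have h2 := two_mul_tri b
  rw [h, h2] at h1
  nlinarith

theorem coeff_sum_tri {n m : ℕ} (h : m < n) :
    coeff m (∑ k ∈ range n, (-X : (ZMod 3)⟦X⟧) ^ (k * (k + 1) / 2)) = coeff m psi := by
  have key : ∀ k, coeff m ((-X : (ZMod 3)⟦X⟧) ^ (k * (k + 1) / 2)) =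
      if k * (k + 1) / 2 = m then (-1) ^ m else 0 := by
    intro k
    rw [neg_pow, show ((-1 : (ZMod 3)⟦X⟧)) = C (-1) by simp, ← map_pow, coeff_C_mul, coeff_X_pow]
    by_cases hk : k * (k + 1) / 2 = m
    · simp [hk]
    · simp [hk, Ne.symm hk]
  rw [map_sum, sum_congr rfl fun k _ => key k, psi, coeff_mk]
  by_cases hs : IsSquare (8 * m + 1)
  · obtain ⟨k, hk⟩ := (isSquare_iff_tri m).1 hs
    rw [if_pos hs, sum_eq_single k]
    · simp [hk]
    · intro b _ hb
      exact if_neg fun h' => hb (tri_inj (h'.trans hk.symm))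
    · intro hkn
      have := two_mul_tri k
      simp only [mem_range, not_lt] at hkn
      exfalso
      nlinarith
  · rw [if_neg hs]
    exact sum_eq_zero fun k _ => if_neg fun h' => hs ((isSquare_iff_tri m).2 ⟨k, h'⟩)

/-! ### Gauss' identity -/

section Gauss

open scoped PowerSeries.WithPiTopology
open Filter Topology

/-- The weight of `c` copies of the part `i`: it vanishes exactly when an odd part is repeated. -/
def podWeight (i c : ℕ) : ZMod 3 := if Odd i → c ≤ 1 then 1 else 0

theorem podSeries_eq_genFun : podSeries = Nat.Partition.genFun podWeight := by
  ext n
  rw [podSeries, coeff_mk, Nat.Partition.coeff_genFun, pod, Nat.card_eq_fintype_card,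
    Fintype.card_subtype, card_filter]
  push_cast
  refine sum_congr rfl fun p _ => ?_
  simp only [podWeight, Finsupp.prod, prod_boole]
  simp

local instance : TopologicalSpace (ZMod 3) := ⊥
local instance : DiscreteTopology (ZMod 3) := ⟨rfl⟩

/-- The Euler factor of `podSeries` at the part `i + 1`. -/
def podFactor (i : ℕ) : (ZMod 3)⟦X⟧ :=
  1 + ∑' j, podWeight (i + 1) (j + 1) • (X : (ZMod 3)⟦X⟧) ^ ((i + 1) * (j + 1))

theorem podFactor_odd (k : ℕ) : podFactor (2 * k) = 1 + X ^ (2 * k + 1) := by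
  rw [podFactor, tsum_eq_single 0]
  · simp [podWeight]
  · intro j hj
    have : ¬ (Odd (2 * k + 1) → j + 1 ≤ 1) := by
      intro h
      have := h (by simp)
      omega
    rw [podWeight, if_neg this, zero_smul]

theorem podFactor_even (k : ℕ) : podFactor (2 * k + 1) * (1 - X ^ (2 * k + 2)) = 1 := by
  have h0 : constantCoeff ((X : (ZMod 3)⟦X⟧) ^ (2 * k + 2)) = 0 := by simp
  have h : podFactor (2 * k + 1) = ∑' j : ℕ, ((X : (ZMod 3)⟦X⟧) ^ (2 * k + 2)) ^ j := by
    have hs := WithPiTopology.summable_pow_of_constantCoeff_eq_zero h0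
    have hw : ∀ j, podWeight (2 * k + 1 + 1) (j + 1) = 1 := fun j =>
      if_pos fun hodd => absurd hodd (by simp [parity_simps])
    rw [hs.tsum_eq_zero_add, pow_zero, podFactor]
    congr 1
    refine tsum_congr fun j => ?_
    rw [hw, one_smul, ← pow_mul]
  rw [h, WithPiTopology.tsum_pow_mul_one_sub_of_constantCoeff_eq_zero h0]

/-- Gauss' identity `∑ pod(k) q ^ k * ∑ (-q) ^ (n (n + 1) / 2) = 1`. -/
theorem podSeries_mul_psi : podSeries * psi = 1 := by
  let u : ℕ → (ZMod 3)⟦X⟧ := fun k => (1 + X ^ (2 * k + 1))⁻¹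
  have hu' : ∀ k, u k * (1 + X ^ (2 * k + 1)) = 1 := fun k =>
    PowerSeries.inv_mul_cancel _ (by simp)
  have hu : ∀ k, u k * (1 - (-X) ^ (2 * k + 1)) = 1 := by
    intro k
    rw [Odd.neg_pow (by simp), sub_neg_eq_add, hu']
  let G : ℕ → (ZMod 3)⟦X⟧ := fun n => ∏ i ∈ range (2 * n), podFactor i
  let S : ℕ → (ZMod 3)⟦X⟧ := fun n => ∑ k ∈ range (2 * n), (-X) ^ (k * (k + 1) / 2)
  have h2 : Tendsto (fun n : ℕ => 2 * n) atTop atTop :=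
    tendsto_id.const_mul_atTop' (by norm_num)
  have hG : Tendsto G atTop (𝓝 podSeries) := by
    have := (Nat.Partition.hasProd_genFun podWeight).tendsto_prod_nat.comp h2
    rw [← podSeries_eq_genFun] at this
    exact this
  have hS : Tendsto S atTop (𝓝 psi) := by
    rw [WithPiTopology.tendsto_iff_coeff_tendsto]
    intro d
    refine tendsto_const_nhds.congr' ?_
    filter_upwards [eventually_gt_atTop d] with n hn
    exact (coeff_sum_tri (by omega)).symm
  -- `G n` inverts the term `s = 0` of Shanks' identity.
  have hGQ : ∀ n, G n * ∏ k ∈ Ico 0 n, (1 - (-X : (ZMod 3)⟦X⟧) ^ (2 * k + 2)) * u k = 1 := by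
    intro n
    induction n with
    | zero => simp [G]
    | succ n ih =>
      have hG1 : G (n + 1) = G n * podFactor (2 * n) * podFactor (2 * n + 1) := by
        simp only [G, show 2 * (n + 1) = 2 * n + 1 + 1 by ring, prod_range_succ]
      rw [prod_Ico_succ_top (Nat.zero_le n), hG1, podFactor_odd,
        Even.neg_pow (by simp [parity_simps])]
      have e1 := hu' n
      have e2 := podFactor_even n
      generalize G n = g at *
      generalize podFactor (2 * n + 1) = f at *
      generalize (∏ k ∈ Ico 0 n, (1 - (-X : (ZMod 3)⟦X⟧) ^ (2 * k + 2)) * u k) = Q at *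
      linear_combination
        (u n * (1 + X ^ (2 * n + 1)) * f * (1 - X ^ (2 * n + 2))) * ih +
          (f * (1 - X ^ (2 * n + 2))) * e1 + e2
  -- The terms with `s ≥ 1` are divisible by `X ^ (2 n + 1)`.
  have hGS : ∀ n, 0 < n → X ^ (2 * n + 1) ∣ G n * S n - 1 := by
    intro n hn
    obtain ⟨n, rfl⟩ := Nat.exists_eq_add_one_of_ne_zero hn.ne'
    simp only [S]
    rw [shanks (-X) u hu, sum_range_succ', zero_mul, pow_zero, mul_one, mul_add (G _), hGQ,
      add_sub_cancel_right]
    refine Dvd.dvd.mul_left (dvd_sum fun s _ => Dvd.dvd.mul_left ?_ _) _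
    rw [neg_pow]
    exact (pow_dvd_pow X (Nat.le_mul_of_pos_left _ s.succ_pos)).mul_left _
  have hlim : Tendsto (fun n => G n * S n) atTop (𝓝 1) := by
    rw [WithPiTopology.tendsto_iff_coeff_tendsto]
    intro d
    refine tendsto_const_nhds.congr' ?_
    filter_upwards [eventually_gt_atTop d] with n hn
    have := X_pow_dvd_iff.1 (hGS n (by omega)) d (by omega)
    rw [map_sub, sub_eq_zero] at this
    exact this.symm
  exact tendsto_nhds_unique (hG.mul hS) hlim

end Gauss

/-! ### Dissection modulo 3 -/

/-- The substitution `q ↦ q ^ 3`. -/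
def expand3 : (ZMod 3)⟦X⟧ →ₐ[ZMod 3] (ZMod 3)⟦X⟧ := PowerSeries.expand 3 (by norm_num)

/-- The part of `F` on the indices congruent to `r` modulo `3`, for `r < 3`: the series
`∑ F_(3 n + r) q ^ n`. -/
def extract (r : ℕ) (F : (ZMod 3)⟦X⟧) : (ZMod 3)⟦X⟧ :=
  PowerSeries.mk fun n => coeff (3 * n + r) F

theorem pow_three_eq_expand3 (F : (ZMod 3)⟦X⟧) : F ^ 3 = expand3 F := by
  have h := MvPowerSeries.map_frobenius_expand (R := ZMod 3) 3 (by norm_num) (f := F)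
  rw [ZMod.frobenius_zmod] at h
  rw [← h, MvPowerSeries.map_id]
  rfl

theorem extract_two_dissected (A B D : (ZMod 3)⟦X⟧) :
    extract 2 (expand3 A + X * expand3 B + X ^ 2 * expand3 D) = D := by
  ext n
  have h1 : ¬ 3 ∣ 3 * n + 2 := by omega
  have h2 : ¬ 3 ∣ 3 * n + 1 := by omega
  rw [extract, coeff_mk, map_add, map_add, coeff_X_pow_mul, show 3 * n + 2 = 3 * n + 1 + 1 by ring,
    coeff_succ_X_mul]
  simp only [expand3, coeff_expand]
  simp [h1, h2]

theorem dissect (F : (ZMod 3)⟦X⟧) :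
    F = expand3 (extract 0 F) + X * expand3 (extract 1 F) + X ^ 2 * expand3 (extract 2 F) := by
  ext m
  obtain ⟨n, h⟩ : ∃ n, m = 3 * n ∨ m = 3 * n + 1 ∨ m = 3 * n + 2 := ⟨m / 3, by omega⟩
  have key : ∀ (r k : ℕ) (G : (ZMod 3)⟦X⟧), coeff k (X ^ r * expand3 G) =
      if r ≤ k ∧ 3 ∣ k - r then coeff ((k - r) / 3) G else 0 := by
    intro r k G
    rw [coeff_X_pow_mul', expand3, coeff_expand]
    by_cases h : r ≤ k <;> simp [h]
  have k0 := key 0 m (extract 0 F)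
  have k1 := key 1 m (extract 1 F)
  rw [pow_zero, one_mul] at k0
  rw [pow_one] at k1
  rw [map_add, map_add, k0, k1, key 2]
  rcases h with rfl | rfl | rfl
  · rw [if_pos (by omega), if_neg (by omega), if_neg (by omega)]
    simp [extract]
  · rw [if_neg (by omega), if_pos (by omega), if_neg (by omega)]
    simp [extract]
  · rw [if_neg (by omega), if_neg (by omega), if_pos (by omega)]
    simp [extract]

theorem extract_two_mul_expand3 (F G : (ZMod 3)⟦X⟧) :
    extract 2 (F * expand3 G) = extract 2 F * G := by
  conv_lhs => rw [dissect F]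
  rw [← extract_two_dissected (extract 0 F * G) (extract 1 F * G) (extract 2 F * G)]
  congr 1
  simp only [map_mul]
  ring

/-- The dissection `ψ(q) = A(q ^ 3) - q ψ(q ^ 9)`. -/
theorem psi_dissect :
    psi = expand3 (extract 0 psi) + X * expand3 (-expand3 psi) := by
  have h2 : extract 2 psi = 0 := by
    ext n
    rw [extract, coeff_mk, psi, coeff_mk, if_neg, map_zero]
    rintro ⟨r, hr⟩
    have h := congrArg (· % 3) hr
    have : r % 3 = 0 ∨ r % 3 = 1 ∨ r % 3 = 2 := by omega
    rcases this with h' | h' | h' <;> simp [Nat.add_mod, Nat.mul_mod, h'] at h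
  have h1 : extract 1 psi = -expand3 psi := by
    ext n
    rw [extract, coeff_mk, map_neg, expand3, coeff_expand]
    by_cases hn : 3 ∣ n
    · obtain ⟨m, rfl⟩ := hn
      rw [if_pos (dvd_mul_right _ _), Nat.mul_div_cancel_left _ (by norm_num), psi, coeff_mk,
        coeff_mk]
      have : IsSquare (8 * (3 * (3 * m) + 1) + 1) ↔ IsSquare (8 * m + 1) := by
        rw [show 8 * (3 * (3 * m) + 1) + 1 = 3 ^ 2 * (8 * m + 1) by ring]
        constructor
        · rintro ⟨r, hr⟩
          obtain ⟨t, rfl⟩ : 3 ∣ r := by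
            have : 3 ∣ r * r := ⟨3 * (8 * m + 1), by rw [← hr]; ring⟩
            rcases (Nat.prime_three.dvd_mul).1 this with h | h <;> exact h
          exact ⟨t, by nlinarith⟩
        · rintro ⟨r, hr⟩
          exact ⟨3 * r, by rw [hr]; ring⟩
      simp only [this]
      split_ifs
      · rw [pow_succ, pow_mul, pow_mul]
        norm_num
      · simp
    · rw [if_neg hn, psi, coeff_mk, if_neg, neg_zero]
      rintro ⟨r, hr⟩
      obtain ⟨t, rfl⟩ : 3 ∣ r := by
        have : 3 ∣ r * r := ⟨8 * n + 3, by rw [← hr]; ring⟩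
        rcases (Nat.prime_three.dvd_mul).1 this with h | h <;> exact h
      have : 24 * n + 9 = 9 * (t * t) := by nlinarith
      omega
  have h := dissect psi
  rw [h1, h2] at h
  simpa using h

/-! ### The congruence for `pod` and the theorem -/

theorem extract_extract_extract_podSeries : extract 2 (extract 2 (extract 2 podSeries)) = 0 := by
  have hP := podSeries_mul_psi
  have hψ0 : psi ≠ 0 := by
    intro h
    rw [h, mul_zero] at hP
    exact zero_ne_one hP
  set A := extract 0 psi
  set B := -expand3 psi with hB
  have hd : psi = expand3 A + X * expand3 B := psi_dissect
  have hsq : ∀ G, extract 2 (psi ^ 2 * expand3 G) = B ^ 2 * G := by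
    intro G
    rw [extract_two_mul_expand3]
    congr 1
    rw [← extract_two_dissected (A ^ 2) (2 * A * B) (B ^ 2)]
    congr 1
    rw [hd]
    simp only [map_mul, map_pow, map_ofNat]
    ring
  have h1 : extract 2 podSeries * psi = expand3 (psi ^ 2) := by
    rw [← extract_two_mul_expand3, ← pow_three_eq_expand3,
      show podSeries * psi ^ 3 = podSeries * psi * (psi ^ 2 * expand3 1) by rw [map_one]; ring,
      hP, one_mul, hsq, hB, map_pow]
    ring
  have h2 : extract 2 (extract 2 podSeries) = psi * expand3 (psi ^ 2) := by
    apply mul_right_cancel₀ hψ0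
    rw [← extract_two_mul_expand3, ← pow_three_eq_expand3,
      show extract 2 podSeries * psi ^ 3 = extract 2 podSeries * psi * psi ^ 2 by ring, h1,
      mul_comm, hsq, hB, map_pow]
    ring
  rw [h2, extract_two_mul_expand3, hd]
  have := extract_two_dissected A B 0
  rw [map_zero, mul_zero, add_zero] at this
  rw [this, zero_mul]

theorem three_dvd_pod (n : ℕ) : 3 ∣ pod (27 * n + 26) := by
  have h := congrArg (coeff n) extract_extract_extract_podSeries
  simp only [extract, podSeries, coeff_mk, map_zero] at h
  rw [show 3 * (3 * (3 * n + 2) + 2) + 2 = 27 * n + 26 by ring] at h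
  exact (ZMod.natCast_eq_zero_iff _ _).1 h

theorem three_dvd_choose {m t : ℕ} (ht : t % 3 = 2) (h : m % 3 ≠ 2 ∨ 3 ∣ (m / 3).choose (t / 3)) :
    3 ∣ m.choose t := by
  have : Fact (Nat.Prime 3) := ⟨Nat.prime_three⟩
  have hl := Choose.choose_modEq_choose_mod_mul_choose_div_nat (n := m) (k := t) (p := 3)
  refine (hl.dvd_iff dvd_rfl).2 ?_
  rcases h with h | h
  · rw [Nat.choose_eq_zero_of_lt (by omega), zero_mul]
    exact dvd_zero _
  · exact h.mul_left _

/-- The case of Lucas' theorem in which the last three ternary digits of the lower index are `2`. -/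
theorem three_dvd_choose_of_mod {m J : ℕ} (hm : m % 27 ≠ 26) : 3 ∣ m.choose (27 * J + 26) := by
  by_cases h1 : m % 3 = 2
  · by_cases h2 : m / 3 % 3 = 2
    · exact three_dvd_choose (by omega) (.inr (three_dvd_choose (by omega)
        (.inr (three_dvd_choose (by omega) (.inl (by omega))))))
    · exact three_dvd_choose (by omega) (.inr (three_dvd_choose (by omega) (.inl h2)))
  · exact three_dvd_choose (by omega) (.inl h1)

theorem stmt18 (J N : ℕ) :
    (3 : ℤ) ∣ MO0 (27 * J + 26) (27 * N + 26) := by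
  refine dvd_sum ?_
  rintro ⟨k, n⟩ hkn
  have hk : k + n * (n + 1) / 2 = 27 * N + 26 := (mem_filter.1 hkn).2
  by_cases hm : (n + (27 * J + 26)) / 2 % 27 = 26
  · have hT := two_mul_tri n
    have h27 : 27 ∣ n * (n + 1) := by
      have : 27 ∣ n ∨ 27 ∣ n + 1 := by omega
      rcases this with h | h
      · exact h.mul_right _
      · exact h.mul_left _
    obtain ⟨j, rfl⟩ : ∃ j, k = 27 * j + 26 := ⟨k / 27, by omega⟩
    exact Dvd.dvd.mul_right (by exact_mod_cast three_dvd_pod j) _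
  · have h : (3 : ℤ) ∣ (((n + (27 * J + 26)) / 2).choose (27 * J + 26) : ℤ) := by
      exact_mod_cast three_dvd_choose_of_mod hm
    exact Dvd.dvd.mul_left (h.mul_left _) _
end
end
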